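/- Let p ≥ 2 and k ≥ 1 be integers and set ν = (p−1)(kp−1). Then every integer n with 1 ≤ n ≤ ν is attainable from T = {(p,0),(0,kp)}, with the possible exception of: integers n with ν − (p−1) < n < ν, and the integer n = ν − (2p−1) in case p is even. -/

import Mathlib

open Pointwise MeasureTheory

/-- The Newton polyhedron `Γ₊(T)`: the Minkowski sum of the convex hull of the
(real images of the) lattice points of `T` with the nonnegative quadrant. -/
noncomputable def GammaPlus (T : Finset (ℕ × ℕ)) : Set (ℝ × ℝ) :=
  convexHull ℝ ((fun v : ℕ × ℕ => ((v.1 : ℝ), (v.2 : ℝ))) '' (T : Set (ℕ × ℕ))) +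
    {v : ℝ × ℝ | 0 ≤ v.1 ∧ 0 ≤ v.2}

/-- `a(T)`: the smallest `x` with `(x,0) ∈ Γ₊(T)`. -/
noncomputable def axisA (T : Finset (ℕ × ℕ)) : ℝ :=
  sInf {x : ℝ | (x, (0 : ℝ)) ∈ GammaPlus T}

/-- `b(T)`: the smallest `y` with `(0,y) ∈ Γ₊(T)`. -/
noncomputable def axisB (T : Finset (ℕ × ℕ)) : ℝ :=
  sInf {y : ℝ | ((0 : ℝ), y) ∈ GammaPlus T}

/-- `S(T)`: the Lebesgue area of the part of the nonnegative quadrant not in `Γ₊(T)`. -/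
noncomputable def areaS (T : Finset (ℕ × ℕ)) : ℝ :=
  (volume ({v : ℝ × ℝ | 0 ≤ v.1 ∧ 0 ≤ v.2} \ GammaPlus T)).toReal

/-- The Newton number `ν(T) = 2 S(T) - a(T) - b(T) + 1`. -/
noncomputable def newtonNumber (T : Finset (ℕ × ℕ)) : ℝ :=
  2 * areaS T - axisA T - axisB T + 1

/-- An integer `n` is attainable from `T` if `n = ν(T ∪ P)` for some finite `P ⊆ ℕ²`. -/
def Attainable (T : Finset (ℕ × ℕ)) (n : ℤ) : Prop :=
  ∃ P : Finset (ℕ × ℕ), (n : ℝ) = newtonNumber (T ∪ P)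

/-!
Put `d = ν - n`. For a convex path in the first quadrant let `h = k * p - k * x - y` be its depth
below the segment from `(0, k * p)` to `(p, 0)`. If the path ends at `(p, 0)`, then by the trapezoid
rule the Newton number drops from `ν` by `2 * ∫ h - h(0)`. Write `d = p * q + r` with `0 ≤ r < p`.
For `r ≤ q` a single bend of depth `q` at `x = 2`, with `h(0) = r`, has deficiency `d`. For `q < r`
one starts with `h(0) = 1` and reaches depth `q` at `x = r + 1 - q` and `x = r + 2 - q`. This leaves
only values of `r` close to `p`, which are obtained from other bends and, when `k = 1`, from
plateaus below the segment from `(0, p - 1)` to `(p - 1, 0)`.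
-/

section NewtonPolyhedron

theorem convex_gammaPlus (T : Finset (ℕ × ℕ)) : Convex ℝ (GammaPlus T) :=
  (convex_convexHull ℝ _).add (convex_Ici (0 : ℝ × ℝ))

theorem isUpperSet_gammaPlus (T : Finset (ℕ × ℕ)) : IsUpperSet (GammaPlus T) :=
  (isUpperSet_Ici (0 : ℝ × ℝ)).add_left

theorem mem_gammaPlus_of_mem {T : Finset (ℕ × ℕ)} {v : ℕ × ℕ} (hv : v ∈ T) :
    ((v.1 : ℝ), (v.2 : ℝ)) ∈ GammaPlus T :=
  Set.mem_add.2 ⟨_, subset_convexHull ℝ _ ⟨v, hv, rfl⟩, 0, by simp, add_zero _⟩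

theorem gammaPlus_subset {T : Finset (ℕ × ℕ)} {C : Set (ℝ × ℝ)} (hconv : Convex ℝ C)
    (hup : IsUpperSet C) (hT : ∀ v ∈ T, ((v.1 : ℝ), (v.2 : ℝ)) ∈ C) : GammaPlus T ⊆ C := by
  rintro _ ⟨u, hu, w, hw, rfl⟩
  have huC : u ∈ C := convexHull_min (by rintro _ ⟨v, hv, rfl⟩; exact hT v hv) hconv hu
  exact hup (le_add_of_nonneg_right (show 0 ≤ w from hw)) huC

theorem Attainable.of_forall_mem_gammaPlus {T T' : Finset (ℕ × ℕ)} {n : ℤ}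
    (h : ∀ v ∈ T', ((v.1 : ℝ), (v.2 : ℝ)) ∈ GammaPlus T) (hn : n = newtonNumber T) :
    Attainable T' n := by
  have hΓ : GammaPlus (T' ∪ T) = GammaPlus T := by
    refine (gammaPlus_subset (convex_gammaPlus T) (isUpperSet_gammaPlus T) fun v hv ↦ ?_).antisymm
      (gammaPlus_subset (convex_gammaPlus _) (isUpperSet_gammaPlus _) fun v hv ↦
        mem_gammaPlus_of_mem (Finset.mem_union_right _ hv))
    exact (Finset.mem_union.1 hv).elim (h v) mem_gammaPlus_of_mem
  exact ⟨T, by simp only [hn, newtonNumber, areaS, axisA, axisB, hΓ]⟩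

end NewtonPolyhedron

section Orientation

/-- Twice the signed area of the triangle `P Q z`. For `P` to the left of `Q` it is nonnegative
exactly when `z` lies on or above the line `PQ`. -/
def orient {R : Type*} [CommRing R] (P Q z : R × R) : R :=
  (Q.1 - P.1) * (z.2 - P.2) - (Q.2 - P.2) * (z.1 - P.1)

variable {P Q : ℝ × ℝ}

theorem convex_orient_nonneg (P Q : ℝ × ℝ) : Convex ℝ {z | 0 ≤ orient P Q z} := by
  intro z hz w hw s t hs ht hst
  have haffine : orient P Q (s • z + t • w) = s * orient P Q z + t * orient P Q w := by
    obtain rfl : t = 1 - s := by linarith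
    simp only [orient, Prod.fst_add, Prod.snd_add, Prod.smul_fst, Prod.smul_snd, smul_eq_mul]
    ring
  exact (add_nonneg (mul_nonneg hs hz) (mul_nonneg ht hw)).trans_eq haffine.symm

theorem isUpperSet_orient_nonneg (hfst : P.1 ≤ Q.1) (hsnd : Q.2 ≤ P.2) :
    IsUpperSet {z | 0 ≤ orient P Q z} := by
  intro z w hzw hz
  have h₁ := mul_le_mul_of_nonneg_left hzw.1 (sub_nonneg.2 hsnd)
  have h₂ := mul_le_mul_of_nonneg_left hzw.2 (sub_nonneg.2 hfst)
  simp only [Set.mem_ofPred_eq, orient] at hz ⊢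
  linarith

theorem mem_of_orient_nonneg {C : Set (ℝ × ℝ)} (hconv : Convex ℝ C) (hup : IsUpperSet C)
    (hP : P ∈ C) (hQ : Q ∈ C) {z : ℝ × ℝ} (hz : z.1 ∈ Set.Ico P.1 Q.1)
    (horient : 0 ≤ orient P Q z) : z ∈ C := by
  have hd : 0 < Q.1 - P.1 := sub_pos.2 (hz.1.trans_lt hz.2)
  set t := (z.1 - P.1) / (Q.1 - P.1) with ht
  have ht₀ : 0 ≤ t := div_nonneg (sub_nonneg.2 hz.1) hd.le
  have ht₁ : t ≤ 1 := (div_le_one hd).2 (by linarith [hz.2])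
  have htd : t * (Q.1 - P.1) = z.1 - P.1 := div_mul_cancel₀ _ hd.ne'
  have hline : (1 - t) • P + t • Q ∈ C := hconv hP hQ (by linarith) ht₀ (by ring)
  refine hup (Prod.mk_le_mk.2 ⟨?_, ?_⟩ : (1 - t) • P + t • Q ≤ z) hline
  · simp only [Prod.smul_fst, smul_eq_mul]
    linarith
  · have : (Q.2 - P.2) * t ≤ z.2 - P.2 := by
      refine le_of_mul_le_mul_right ?_ hd
      rw [orient, ← htd] at horient
      linarith
    simp only [Prod.smul_snd, smul_eq_mul]
    linarith

end Orientation

section Trapezoid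

/-- The trapezoid between the horizontal axis and the segment from `P` to `Q`, half-open so that
the trapezoids below consecutive edges of a path are disjoint. -/
def trapezoid (P Q : ℝ × ℝ) : Set (ℝ × ℝ) :=
  {z | z.1 ∈ Set.Ico P.1 Q.1 ∧ 0 ≤ z.2 ∧ orient P Q z < 0}

variable {P Q : ℝ × ℝ}

theorem measurableSet_trapezoid (P Q : ℝ × ℝ) : MeasurableSet (trapezoid P Q) := by
  unfold trapezoid orient
  measurability

theorem orient_neg_iff_lt {z : ℝ × ℝ} (hPQ : P.1 < Q.1) :
    orient P Q z < 0 ↔ z.2 < P.2 + (Q.2 - P.2) / (Q.1 - P.1) * (z.1 - P.1) := by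
  have hd : 0 < Q.1 - P.1 := sub_pos.2 hPQ
  rw [← sub_lt_iff_lt_add', div_mul_eq_mul_div, lt_div_iff₀ hd, orient, sub_neg, mul_comm]

theorem integral_affine (u v c d : ℝ) :
    ∫ x in u..v, c + d * (x - u) = (v - u) * (c + d * (v - u) / 2) := by
  rw [intervalIntegral.integral_comp_sub_right (fun x ↦ c + d * x),
    intervalIntegral.integral_add (by simp) (Continuous.intervalIntegrable (by fun_prop) _ _),
    intervalIntegral.integral_const, intervalIntegral.integral_const_mul, integral_id, sub_self,
    smul_eq_mul]
  ring

theorem volume_trapezoid (hPQ : P.1 < Q.1) (hP : 0 ≤ P.2) (hQ : 0 ≤ Q.2) :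
    volume (trapezoid P Q) = ENNReal.ofReal ((Q.1 - P.1) * (P.2 + Q.2) / 2) := by
  have hd : 0 < Q.1 - P.1 := sub_pos.2 hPQ
  set ℓ : ℝ → ℝ := fun x ↦ P.2 + (Q.2 - P.2) / (Q.1 - P.1) * (x - P.1) with hℓ
  have hℓ_nonneg : ∀ x ∈ Set.Ico P.1 Q.1, 0 ≤ ℓ x := by
    intro x hx
    have : ℓ x = (P.2 * (Q.1 - x) + Q.2 * (x - P.1)) / (Q.1 - P.1) := by
      simp only [hℓ]
      field_simp
      ring
    rw [this]
    exact div_nonneg (add_nonneg (mul_nonneg hP (sub_nonneg.2 hx.2.le))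
      (mul_nonneg hQ (sub_nonneg.2 hx.1))) hd.le
  have haxis : volume (Set.univ ×ˢ {0} : Set (ℝ × ℝ)) = 0 := by
    simp [Measure.volume_eq_prod]
  have hae : trapezoid P Q =ᵐ[volume] regionBetween (fun _ ↦ 0) ℓ (Set.Ico P.1 Q.1) := by
    filter_upwards [compl_mem_ae_iff.2 haxis] with z hz
    have hz₀ : (0 : ℝ) ≠ z.2 := by simpa [eq_comm] using hz
    refine propext (and_congr_right fun _ ↦ and_congr ?_ (orient_neg_iff_lt hPQ))
    exact hz₀.le_iff_lt
  rw [measure_congr hae, Measure.volume_eq_prod,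
    volume_regionBetween_eq_integral integrableOn_zero
      ((by fun_prop : Continuous ℓ).integrableOn_Icc.mono_set Set.Ico_subset_Icc_self)
      measurableSet_Ico hℓ_nonneg,
    integral_Ico_eq_integral_Ioc, ← intervalIntegral.integral_of_le hPQ.le]
  have harea : ∫ x in P.1..Q.1, ℓ x = (Q.1 - P.1) * (P.2 + Q.2) / 2 := by
    rw [integral_affine, div_mul_cancel₀ _ hd.ne']
    ring
  simpa only [Pi.sub_apply, sub_zero] using congrArg ENNReal.ofReal harea

end Trapezoid

section Descent

/-- A lattice or real path, listed vertex by vertex from left to right, that strictly descends from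
the vertical axis to the horizontal axis. -/
structure IsDescent {R : Type*} [Zero R] [Preorder R] {m : ℕ} (V : Fin (m + 2) → R × R) :
    Prop where
  fst_zero : (V 0).1 = 0
  snd_last : (V (Fin.last _)).2 = 0
  strictMono_fst : StrictMono fun i ↦ (V i).1
  strictAnti_snd : StrictAnti fun i ↦ (V i).2

/-- The Newton number of the polyhedron lying above the path `V`, with twice the area computed by
the trapezoid rule. -/
def pathNewtonNumber {R : Type*} [CommRing R] {m : ℕ} (V : Fin (m + 2) → R × R) : R :=
  ∑ i : Fin (m + 1), ((V i.succ).1 - (V i.castSucc).1) * ((V i.castSucc).2 + (V i.succ).2)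
    - (V (Fin.last _)).1 - (V 0).2 + 1

variable {m : ℕ}

theorem IsDescent.fst_nonneg {R : Type*} [Zero R] [Preorder R] {V : Fin (m + 2) → R × R}
    (hV : IsDescent V) (i : Fin (m + 2)) : 0 ≤ (V i).1 :=
  hV.fst_zero.symm.trans_le (hV.strictMono_fst.monotone (Fin.zero_le i))

theorem IsDescent.snd_nonneg {R : Type*} [Zero R] [Preorder R] {V : Fin (m + 2) → R × R}
    (hV : IsDescent V) (i : Fin (m + 2)) : 0 ≤ (V i).2 :=
  hV.snd_last.symm.trans_le (hV.strictAnti_snd.antitone (Fin.le_last i))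

/-- The path `V` traces the compact edges of `Γ₊(T)`: it runs inside `Γ₊(T)`, and no point of `T`
lies below the line through one of its edges. Collinear consecutive edges are allowed. -/
structure IsNewtonBoundary (T : Finset (ℕ × ℕ)) (V : Fin (m + 2) → ℝ × ℝ) : Prop
    extends IsDescent V where
  mem_gammaPlus : ∀ i, V i ∈ GammaPlus T
  orient_nonneg : ∀ i : Fin (m + 1), ∀ v ∈ T,
    0 ≤ orient (V i.castSucc) (V i.succ) ((v.1 : ℝ), (v.2 : ℝ))

variable {V : Fin (m + 2) → ℝ × ℝ} {T : Finset (ℕ × ℕ)}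

theorem IsNewtonBoundary.orient_nonneg_of_mem_gammaPlus (hV : IsNewtonBoundary T V)
    (i : Fin (m + 1)) {z : ℝ × ℝ} (hz : z ∈ GammaPlus T) :
    0 ≤ orient (V i.castSucc) (V i.succ) z :=
  gammaPlus_subset (convex_orient_nonneg _ _)
    (isUpperSet_orient_nonneg (hV.strictMono_fst Fin.castSucc_lt_succ).le
      (hV.strictAnti_snd Fin.castSucc_lt_succ).le) (hV.orient_nonneg i) hz

theorem IsNewtonBoundary.axisA_eq (hV : IsNewtonBoundary T V) :
    axisA T = (V (Fin.last _)).1 := by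
  refine IsLeast.csInf_eq ⟨?_, fun x hx ↦ ?_⟩
  · simpa only [Set.mem_ofPred_eq, ← hV.snd_last] using hV.mem_gammaPlus (Fin.last _)
  · have hedge := hV.orient_nonneg_of_mem_gammaPlus (Fin.last m) hx
    have hpos : 0 < (V (Fin.last m).castSucc).2 :=
      hV.snd_last.symm.trans_lt (hV.strictAnti_snd (Fin.castSucc_lt_last _))
    rw [orient, Fin.succ_last, hV.snd_last] at hedge
    exact le_of_mul_le_mul_left (by linarith) hpos

theorem IsNewtonBoundary.axisB_eq (hV : IsNewtonBoundary T V) :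
    axisB T = (V 0).2 := by
  refine IsLeast.csInf_eq ⟨?_, fun y hy ↦ ?_⟩
  · simpa only [Set.mem_ofPred_eq, ← hV.fst_zero] using hV.mem_gammaPlus 0
  · have hedge := hV.orient_nonneg_of_mem_gammaPlus 0 hy
    have hpos : 0 < (V (Fin.succ 0)).1 :=
      hV.fst_zero.symm.trans_lt (hV.strictMono_fst (Fin.succ_pos 0))
    rw [orient, Fin.castSucc_zero, hV.fst_zero] at hedge
    exact le_of_mul_le_mul_left (by linarith) hpos

theorem exists_mem_Ico_castSucc_succ {α : Type*} [LinearOrder α] {f : Fin (m + 1) → α} {x : α}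
    (h₀ : f 0 ≤ x) (hlast : x < f (Fin.last m)) :
    ∃ i : Fin m, x ∈ Set.Ico (f i.castSucc) (f i.succ) := by
  by_contra! h
  have hle : ∀ j, f j ≤ x :=
    Fin.induction h₀ fun i hi ↦ not_lt.1 fun hlt ↦ h i ⟨hi, hlt⟩
  exact (hle _).not_gt hlast

theorem IsNewtonBoundary.quadrant_diff_gammaPlus_eq (hV : IsNewtonBoundary T V) :
    {v : ℝ × ℝ | 0 ≤ v.1 ∧ 0 ≤ v.2} \ GammaPlus T =
      ⋃ i : Fin (m + 1), trapezoid (V i.castSucc) (V i.succ) := by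
  ext z
  simp only [Set.mem_sdiff, Set.mem_ofPred_eq, Set.mem_iUnion]
  constructor
  · rintro ⟨⟨hz₁, hz₂⟩, hz⟩
    have hlast : z.1 < (V (Fin.last _)).1 := by
      by_contra! hle
      have : V (Fin.last _) ≤ z := ⟨hle, hV.snd_last.trans_le hz₂⟩
      exact hz (isUpperSet_gammaPlus T this (hV.mem_gammaPlus _))
    obtain ⟨i, hi⟩ := exists_mem_Ico_castSucc_succ (f := fun j ↦ (V j).1)
      (hV.fst_zero.trans_le hz₁) hlast
    refine ⟨i, hi, hz₂, lt_of_not_ge fun horient ↦ hz ?_⟩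
    exact mem_of_orient_nonneg (convex_gammaPlus T) (isUpperSet_gammaPlus T) (hV.mem_gammaPlus _)
      (hV.mem_gammaPlus _) hi horient
  · rintro ⟨i, hz₁, hz₂, horient⟩
    exact ⟨⟨(hV.fst_nonneg _).trans hz₁.1, hz₂⟩, fun hz ↦
      (hV.orient_nonneg_of_mem_gammaPlus i hz).not_gt horient⟩

theorem pairwise_disjoint_trapezoid (hV : StrictMono fun i ↦ (V i).1) :
    Pairwise (Function.onFun Disjoint
      fun i : Fin (m + 1) ↦ trapezoid (V i.castSucc) (V i.succ)) := by
  refine (pairwise_disjoint_on _).2 fun i j hij ↦ Set.disjoint_left.2 fun z hi hj ↦ ?_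
  have hsucc : (V i.succ).1 ≤ (V j.castSucc).1 :=
    hV.monotone (Fin.succ_le_castSucc_iff.2 hij)
  exact (hi.1.2.trans_le hsucc).not_ge hj.1.1

theorem IsNewtonBoundary.areaS_eq (hV : IsNewtonBoundary T V) :
    areaS T = ∑ i : Fin (m + 1),
      ((V i.succ).1 - (V i.castSucc).1) * ((V i.castSucc).2 + (V i.succ).2) / 2 := by
  have hstep (i : Fin (m + 1)) : (V i.castSucc).1 < (V i.succ).1 :=
    hV.strictMono_fst Fin.castSucc_lt_succ
  have hnonneg (i : Fin (m + 1)) :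
      0 ≤ ((V i.succ).1 - (V i.castSucc).1) * ((V i.castSucc).2 + (V i.succ).2) / 2 :=
    div_nonneg (mul_nonneg (sub_nonneg.2 (hstep i).le)
      (add_nonneg (hV.snd_nonneg _) (hV.snd_nonneg _))) zero_le_two
  rw [areaS, hV.quadrant_diff_gammaPlus_eq,
    measure_iUnion (pairwise_disjoint_trapezoid hV.strictMono_fst)
      fun _ ↦ measurableSet_trapezoid _ _, tsum_fintype]
  simp only [volume_trapezoid (hstep _) (hV.snd_nonneg _) (hV.snd_nonneg _)]
  rw [← ENNReal.ofReal_sum_of_nonneg fun i _ ↦ hnonneg i,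
    ENNReal.toReal_ofReal (Finset.sum_nonneg fun i _ ↦ hnonneg i)]

theorem IsNewtonBoundary.newtonNumber_eq_pathNewtonNumber (hV : IsNewtonBoundary T V) :
    newtonNumber T = pathNewtonNumber V := by
  rw [newtonNumber, hV.areaS_eq, hV.axisA_eq,
    hV.axisB_eq, pathNewtonNumber, ← Finset.sum_div,
    mul_div_cancel₀ _ two_ne_zero]

end Descent

section ConvexPath

variable {m : ℕ}

theorem apply_le_of_succ_le_of_le_succ {α : Type*} [Preorder α] {f : Fin (m + 1) → α}
    {i : Fin (m + 1)} (hdown : ∀ j : Fin m, j.castSucc < i → f j.succ ≤ f j.castSucc)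
    (hup : ∀ j : Fin m, i ≤ j.castSucc → f j.castSucc ≤ f j.succ) (j : Fin (m + 1)) :
    f i ≤ f j := by
  rcases le_total i j with hij | hji
  · induction j using Fin.induction with
    | zero => rw [Fin.le_zero_iff.1 hij]
    | succ j ih =>
      rcases hij.eq_or_lt with rfl | hlt
      · rfl
      · have hle := Fin.le_castSucc_iff.2 hlt
        exact (ih hle).trans (hup j hle)
  · induction j using Fin.reverseInduction with
    | last => rw [Fin.last_le_iff.1 hji]
    | cast j ih =>
      rcases hji.eq_or_lt with rfl | hlt
      · rfl
      · exact (ih (Fin.castSucc_lt_iff_succ_le.1 hlt)).trans (hdown j hlt)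

theorem orient_nonneg_of_consecutive {V : Fin (m + 2) → ℝ × ℝ}
    (hV : StrictMono fun i ↦ (V i).1)
    (hconv : ∀ i : Fin m,
      0 ≤ orient (V i.castSucc.castSucc) (V i.succ.castSucc) (V i.succ.succ))
    (i : Fin (m + 1)) (j : Fin (m + 2)) : 0 ≤ orient (V i.castSucc) (V i.succ) (V j) := by
  set Δ : Fin (m + 1) → ℝ := fun i ↦ (V i.succ).1 - (V i.castSucc).1
  set s : Fin (m + 1) → ℝ := fun i ↦ ((V i.succ).2 - (V i.castSucc).2) / Δ i
  have hΔ (i) : 0 < Δ i := sub_pos.2 (hV Fin.castSucc_lt_succ)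
  have hsΔ (i) : s i * Δ i = (V i.succ).2 - (V i.castSucc).2 := div_mul_cancel₀ _ (hΔ i).ne'
  have hs : Monotone s := Fin.monotone_iff_le_succ.2 fun i ↦ by
    refine (div_le_div_iff₀ (hΔ _) (hΔ _)).2 ?_
    have := hconv i
    simp only [orient, Δ, Fin.succ_castSucc] at this ⊢
    linarith
  have hmin : (V i.castSucc).2 - s i * (V i.castSucc).1 ≤ (V j).2 - s i * (V j).1 := by
    refine apply_le_of_succ_le_of_le_succ (f := fun l ↦ (V l).2 - s i * (V l).1)
      (fun l hl ↦ ?_) (fun l hl ↦ ?_) j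
    · have := mul_le_mul_of_nonneg_right (hs (Fin.castSucc_lt_castSucc_iff.1 hl).le) (hΔ l).le
      linarith [hsΔ l]
    · have := mul_le_mul_of_nonneg_right (hs (Fin.castSucc_le_castSucc_iff.1 hl)) (hΔ l).le
      linarith [hsΔ l]
  have horient : orient (V i.castSucc) (V i.succ) (V j) =
      Δ i * (((V j).2 - s i * (V j).1) - ((V i.castSucc).2 - s i * (V i.castSucc).1)) := by
    rw [orient, ← hsΔ]
    ring
  exact horient ▸ mul_nonneg (hΔ i).le (sub_nonneg.2 hmin)

theorem isNewtonBoundary_image {W : Fin (m + 2) → ℕ × ℕ} {V : Fin (m + 2) → ℝ × ℝ}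
    (hWV : ∀ i, V i = (((W i).1 : ℝ), ((W i).2 : ℝ))) (hV : IsDescent V)
    (hconv : ∀ i : Fin m,
      0 ≤ orient (V i.castSucc.castSucc) (V i.succ.castSucc) (V i.succ.succ)) :
    IsNewtonBoundary (Finset.univ.image W) V where
  toIsDescent := hV
  mem_gammaPlus i := hWV i ▸ mem_gammaPlus_of_mem (Finset.mem_image_of_mem W (Finset.mem_univ i))
  orient_nonneg i v hv := by
    obtain ⟨j, -, rfl⟩ := Finset.mem_image.1 hv
    exact hWV j ▸ orient_nonneg_of_consecutive hV.strictMono_fst hconv i j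

theorem attainable_of_convexPath {A B : ℕ} {V : Fin (m + 2) → ℤ × ℤ} (hV : IsDescent V)
    (hconv : ∀ i : Fin m,
      0 ≤ orient (V i.castSucc.castSucc) (V i.succ.castSucc) (V i.succ.succ))
    (hA : (V (Fin.last _)).1 ≤ A) (hB : (V 0).2 ≤ B) :
    Attainable {(A, 0), (0, B)} (pathNewtonNumber V) := by
  set U : Fin (m + 2) → ℝ × ℝ := fun i ↦ (((V i).1 : ℝ), ((V i).2 : ℝ)) with hU
  set W : Fin (m + 2) → ℕ × ℕ := fun i ↦ ((V i).1.toNat, (V i).2.toNat)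
  have hUW (i) : U i = (((W i).1 : ℝ), ((W i).2 : ℝ)) := by
    have hfst : (((V i).1.toNat : ℤ) : ℝ) = (V i).1 :=
      congrArg _ (Int.toNat_of_nonneg (hV.fst_nonneg i))
    have hsnd : (((V i).2.toNat : ℤ) : ℝ) = (V i).2 :=
      congrArg _ (Int.toNat_of_nonneg (hV.snd_nonneg i))
    exact Prod.ext hfst.symm hsnd.symm
  have hUdesc : IsDescent U :=
    ⟨congrArg _ hV.fst_zero |>.trans Int.cast_zero, congrArg _ hV.snd_last |>.trans Int.cast_zero,
      Int.cast_strictMono.comp hV.strictMono_fst,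
      Int.cast_strictMono.comp_strictAnti hV.strictAnti_snd⟩
  have hboundary : IsNewtonBoundary (Finset.univ.image W) U :=
    isNewtonBoundary_image hUW hUdesc fun i ↦ by
      have := hconv i
      simp only [orient, hU] at this ⊢
      exact_mod_cast this
  refine Attainable.of_forall_mem_gammaPlus (T := Finset.univ.image W) (fun v hv ↦ ?_) ?_
  · have hup := isUpperSet_gammaPlus (Finset.univ.image W)
    rcases Finset.mem_insert.1 hv with rfl | hv
    · refine hup (Prod.mk_le_mk.2 ⟨?_, ?_⟩) (hboundary.mem_gammaPlus (Fin.last _))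
      · exact_mod_cast hA
      · simp [hV.snd_last]
    · obtain rfl := Finset.mem_singleton.1 hv
      refine hup (Prod.mk_le_mk.2 ⟨?_, ?_⟩) (hboundary.mem_gammaPlus 0)
      · simp [hV.fst_zero]
      · exact_mod_cast hB
  · rw [hboundary.newtonNumber_eq_pathNewtonNumber]
    simp only [pathNewtonNumber, hU]
    push_cast
    rfl

end ConvexPath

section ShortPaths

variable {A B : ℕ} {n : ℤ}

theorem attainable_of_segment {a b : ℤ} (ha : 0 < a) (haA : a ≤ A) (hb : 0 < b) (hbB : b ≤ B)
    (hn : n = (a - 1) * (b - 1)) : Attainable {(A, 0), (0, B)} n := by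
  have hV : IsDescent ![((0 : ℤ), b), (a, 0)] :=
    ⟨rfl, rfl, Fin.strictMono_iff_lt_succ.2 (Fin.forall_fin_one.2 ha),
      Fin.strictAnti_iff_succ_lt.2 (Fin.forall_fin_one.2 hb)⟩
  have hnumber : pathNewtonNumber ![((0 : ℤ), b), (a, 0)] = a * b - a - b + 1 := by
    simp [pathNewtonNumber]
  obtain rfl : n = pathNewtonNumber ![(0, b), (a, 0)] := by
    rw [hn, hnumber]
    ring
  exact attainable_of_convexPath hV (fun i ↦ i.elim0) haA hbB

theorem attainable_of_bend {a b x y : ℤ} (hx : 0 < x) (hxa : x < a) (haA : a ≤ A) (hy : 0 < y)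
    (hyb : y < b) (hbB : b ≤ B) (hconv : x * b + y * a ≤ a * b)
    (hn : n = (x - 1) * b + (y - 1) * a + 1) : Attainable {(A, 0), (0, B)} n := by
  have hV : IsDescent ![((0 : ℤ), b), (x, y), (a, 0)] :=
    ⟨rfl, rfl, Fin.strictMono_iff_lt_succ.2 (Fin.forall_fin_two.2 ⟨hx, hxa⟩),
      Fin.strictAnti_iff_succ_lt.2 (Fin.forall_fin_two.2 ⟨hyb, hy⟩)⟩
  have horient : 0 ≤ orient (0, b) (x, y) (a, 0) := by
    rw [orient]
    linarith
  have hnumber : pathNewtonNumber ![(0, b), (x, y), (a, 0)] =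
      x * (b + y) + (a - x) * y - a - b + 1 := by
    simp [pathNewtonNumber, Fin.sum_univ_succ]
  obtain rfl : n = pathNewtonNumber ![(0, b), (x, y), (a, 0)] := by
    rw [hn, hnumber]
    ring
  exact attainable_of_convexPath hV (Fin.forall_fin_one.2 horient) haA hbB

-- Measured below the line from `(0, k * p)` to `(p, 0)`, the path has depths `1`, `w`, `w`, `0`.
theorem attainable_of_plateau {k p w x : ℤ} (hw : 0 < w) (hx : 0 < x) (hxp : x + 1 < p)
    (hwk : w < k * (p - x - 1)) (hpA : p ≤ A) (hkpB : k * p - 1 ≤ B)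
    (hn : n = (p - 1) * (k * p - 1) - (p * w + w + x - 1)) :
    Attainable {(A, 0), (0, B)} n := by
  have hk : 0 < k := pos_of_mul_pos_left (hw.trans hwk) (by linarith)
  have hkx : 0 < k * x := mul_pos hk hx
  set V : Fin 4 → ℤ × ℤ :=
    ![(0, k * p - 1), (x, k * (p - x) - w), (x + 1, k * (p - x - 1) - w), (p, 0)]
  have hV : IsDescent V := by
    refine ⟨rfl, rfl, Fin.strictMono_iff_lt_succ.2 ?_, Fin.strictAnti_iff_succ_lt.2 ?_⟩
    · exact Fin.forall_fin_succ.2 ⟨hx, Fin.forall_fin_two.2 ⟨lt_add_one x, hxp⟩⟩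
    · have h₁ : k * (p - x) - w < k * p - 1 := by linarith
      have h₂ : k * (p - x - 1) - w < k * (p - x) - w := by linarith
      exact Fin.forall_fin_succ.2 ⟨h₁, Fin.forall_fin_two.2 ⟨h₂, sub_pos.2 hwk⟩⟩
  have horient₁ : orient (V 0) (V 1) (V 2) = w - 1 := by
    simp only [orient, V, Matrix.cons_val]
    ring
  have horient₂ : orient (V 1) (V 2) (V 3) = w := by
    simp only [orient, V, Matrix.cons_val]
    ring
  have hconv : 0 ≤ orient (V 0) (V 1) (V 2) ∧ 0 ≤ orient (V 1) (V 2) (V 3) :=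
    ⟨horient₁ ▸ Int.sub_nonneg.2 hw, horient₂ ▸ hw.le⟩
  obtain rfl : n = pathNewtonNumber V := by
    rw [hn, pathNewtonNumber, Fin.sum_univ_three]
    simp only [V, Nat.reduceAdd, Fin.reduceLast, Fin.reduceSucc, Fin.reduceCastSucc,
      Matrix.cons_val]
    ring
  exact attainable_of_convexPath hV (Fin.forall_fin_two.2 hconv) hpA hkpB

end ShortPaths

section Deficiency

variable {A B : ℕ} {p k q r n : ℤ}

theorem attainable_of_lt_mul (hp : 2 ≤ p) (hpA : p ≤ A) (hkpB : k * p ≤ B) (hn : 0 < n)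
    (hnkp : n < k * p) : Attainable {(A, 0), (0, B)} n :=
  attainable_of_segment (a := 2) (b := n + 1) two_pos (hp.trans hpA) (by linarith) (by linarith)
    (by ring)

theorem attainable_of_remainder_le_quotient (hk : 0 < k) (hpA : p ≤ A) (hkpB : k * p ≤ B)
    (hr : 0 ≤ r) (hrq : r ≤ q) (hq : q < k * (p - 2))
    (hn : n = (p - 1) * (k * p - 1) - (p * q + r)) : Attainable {(A, 0), (0, B)} n := by
  have hp : 0 < p - 2 := pos_of_mul_pos_right ((hr.trans hrq).trans_lt hq) hk.le
  have hpr : (p - 2) * r ≤ p * q :=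
    mul_le_mul (by linarith) hrq hr (by linarith)
  exact attainable_of_bend (a := p) (b := k * p - r) (x := 2) (y := k * (p - 2) - q) two_pos
    (by linarith) hpA (by linarith) (by linarith) (by linarith) (by linarith) (by rw [hn]; ring)

theorem attainable_of_odd {m : ℤ} (hpm : p = 2 * m + 1) (hm : 0 < m) (hk : 0 < k) (hpA : p ≤ A)
    (hkpB : k * p ≤ B) (hq : 0 < q) (hqkm : q < k * m)
    (hn : n = (p - 1) * (k * p - 1) - (p * q + (p - 1))) : Attainable {(A, 0), (0, B)} n := by
  subst hpm
  have hmq : 2 * m + 1 ≤ (2 * m + 1) * q := le_mul_of_one_le_right (by linarith) hq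
  exact attainable_of_bend (a := 2 * m + 1) (b := k * (2 * m + 1) - 2) (x := m + 1)
    (y := k * m - q) (by linarith) (by linarith) hpA (by linarith) (by linarith) (by linarith)
    (by linarith) (by rw [hn]; ring)

theorem attainable_of_quotient_lt_remainder (hk : 2 ≤ k) (hpA : p ≤ A) (hkpB : k * p ≤ B)
    (hq : 0 < q) (hqr : q < r) (hrp : r < p) (hexc : r = p - 1 → q ≠ 1)
    (hn : n = (p - 1) * (k * p - 1) - (p * q + r)) : Attainable {(A, 0), (0, B)} n := by
  have hplateau (hr : r < p + q - 2) (hqk : q < k * (p + q - r - 2)) :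
      Attainable {(A, 0), (0, B)} n :=
    attainable_of_plateau (p := p) (k := k) (w := q) (x := r + 1 - q) hq (by linarith)
      (by linarith) (by linarith) hpA (by linarith) (by rw [hn]; ring)
  rcases (Int.le_sub_one_of_lt hrp).lt_or_eq with hr | rfl
  · exact hplateau (by linarith) (by nlinarith)
  have hq₂ : 2 ≤ q := by grind
  by_cases hkq : k = 2 ∧ q = 2
  · obtain ⟨rfl, rfl⟩ := hkq
    exact attainable_of_bend (a := p - 1) (b := 2 * p - 1) (x := p - 3) (y := 4) (by linarith)
      (by linarith) (by linarith) four_pos (by linarith) (by linarith) (by linarith)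
      (by rw [hn]; ring)
  · refine hplateau (by linarith) ?_
    rcases hq₂.eq_or_lt with rfl | hq₃
    · grind
    · nlinarith

theorem attainable_of_quotient_lt_remainder_square (hpA : p ≤ A) (hpB : p ≤ B)
    (hq : 0 < q) (hqr : q < r) (hrp : r < p) (hexc : r = p - 1 → q ≠ 1) (hpn : p ≤ n)
    (hn : n = (p - 1) * (p - 1) - (p * q + r)) : Attainable {(A, 0), (0, B)} n := by
  by_cases hr : r ≤ p - 3
  · exact attainable_of_plateau (p := p) (k := 1) (w := q) (x := r + 1 - q) hq (by linarith)
      (by linarith) (by linarith) hpA (by linarith) (by rw [hn]; ring)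
  have hqp : q ≤ p - 4 := by nlinarith
  have hsmaller {x : ℤ} (hx : 0 < x) (hqx : q < p - 1 - x) (hq₂ : 2 ≤ q) (hrx : r = p + x - 4) :
      Attainable {(A, 0), (0, B)} n :=
    attainable_of_plateau (p := p - 1) (k := 1) (w := q - 1) (x := x) (by linarith) hx
      (by linarith) (by linarith) (by linarith) (by linarith) (by rw [hn, hrx]; ring)
  obtain rfl | rfl : r = p - 2 ∨ r = p - 1 := by lia
  · rcases (Int.add_one_le_of_lt hq).eq_or_lt with rfl | hq₂
    · exact attainable_of_segment (a := p) (b := p - 2) (by linarith) hpA (by linarith)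
        (by linarith) (by rw [hn]; ring)
    · exact hsmaller two_pos (by linarith) hq₂ (by ring)
  · have hq₂ : 2 ≤ q := by grind
    rcases hqp.lt_or_eq with hqp | rfl
    · exact hsmaller three_pos (by linarith) hq₂ (by ring)
    obtain rfl | hp : p = 6 ∨ 7 ≤ p := by lia
    · exact attainable_of_segment (a := 3) (b := 5) (by simp) (by linarith) (by simp)
        (by linarith) hn
    · exact attainable_of_bend (a := 4) (b := p - 3) (x := 2) (y := 2) two_pos (by simp)
        (by linarith) two_pos (by linarith) (by linarith) (by linarith) (by rw [hn]; ring)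

theorem attainable_of_quotient_pos (hk : 0 < k) (hpA : p ≤ A) (hkpB : k * p ≤ B) (hq : 0 < q)
    (hr : 0 ≤ r) (hrp : r < p) (hn₀ : 0 < n)
    (hexc : Even p → n ≠ (p - 1) * (k * p - 1) - (2 * p - 1))
    (hn : n = (p - 1) * (k * p - 1) - (p * q + r)) : Attainable {(A, 0), (0, B)} n := by
  have hp : 2 ≤ p := by
    by_contra! hp
    obtain rfl : p = 1 := by linarith
    linarith
  rcases lt_or_ge n (k * p) with hnkp | hkpn
  · exact attainable_of_lt_mul hp hpA hkpB hn₀ hnkp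
  have hqkp : q < k * (p - 2) := by
    by_contra! hle
    have hpq : p * (k * (p - 2)) ≤ p * q := mul_le_mul_of_nonneg_left hle (by linarith)
    linarith
  rcases le_or_gt r q with hrq | hqr
  · exact attainable_of_remainder_le_quotient hk hpA hkpB hr hrq hqkp hn
  by_cases hlast : r = p - 1 ∧ q = 1
  · obtain ⟨rfl, rfl⟩ := hlast
    obtain ⟨m, rfl⟩ : Odd p := Int.not_even_iff_odd.1 fun h ↦ hexc h (by rw [hn]; ring)
    exact attainable_of_odd rfl (by linarith) hk hpA hkpB hq (by nlinarith) hn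
  rcases (Int.add_one_le_of_lt hk).eq_or_lt with rfl | hk₂
  · simp only [zero_add, one_mul] at hkpB hkpn hn
    exact attainable_of_quotient_lt_remainder_square hpA hkpB hq hqr hrp (by tauto) hkpn hn
  · exact attainable_of_quotient_lt_remainder hk₂ hpA hkpB hq hqr hrp (by tauto) hn

end Deficiency

/-- possible Newton numbers of deformations of `tr(p, kp)`. -/
theorem stmt_1 (p k : ℕ) (ν : ℤ) (hp : 2 ≤ p) (hk : 1 ≤ k)
    (hν : ν = ((p : ℤ) - 1) * ((k : ℤ) * p - 1))
    (n : ℤ) (hn1 : 1 ≤ n) (hn2 : n ≤ ν)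
    (e1 : ¬ (ν - ((p : ℤ) - 1) < n ∧ n < ν))
    (e2 : ¬ (Even p ∧ n = ν - (2 * (p : ℤ) - 1))) :
    Attainable {(p, 0), (0, k * p)} n := by
  subst hν
  have hp₀ : (0 : ℤ) < p := by lia
  have hkp : (2 : ℤ) ≤ k * p := mod_cast hp.trans (Nat.le_mul_of_pos_left p hk)
  have hkpB : (k : ℤ) * p ≤ (k * p : ℕ) := (Nat.cast_mul k p).ge
  set d := ((p : ℤ) - 1) * (k * p - 1) - n
  have hn : n = (p - 1) * (k * p - 1) - d := (sub_sub_cancel _ n).symm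
  have hdqr : p * (d / p) + d % p = d := Int.mul_ediv_add_emod d p
  have hr : 0 ≤ d % p := Int.emod_nonneg d hp₀.ne'
  have hrp : d % p < p := Int.emod_lt_of_pos d hp₀
  rcases (Int.ediv_nonneg (sub_nonneg.2 hn2) hp₀.le : 0 ≤ d / p).eq_or_lt with hq | hq
  · obtain hd₀ | hdp : d = 0 ∨ d = p - 1 := by
      rw [← hq] at hdqr
      lia
    · exact attainable_of_segment hp₀ le_rfl (by linarith) hkpB (by linarith)
    · exact attainable_of_segment (b := k * p - 1) hp₀ le_rfl (by linarith) (by linarith)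
        (by linarith)
  · exact attainable_of_quotient_pos (mod_cast hk) le_rfl hkpB hq hr hrp hn1
      (fun hp_even hne ↦ e2 ⟨(Int.even_coe_nat p).1 hp_even, hne⟩) (by rw [hdqr]; exact hn)
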